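/- Let α > 1 and u(x,y) = −((x+1)² + (y+1)²)^{(1−α)/2} on the open square (0,1)². Then D²u has one positive and one negative eigenvalue, and u satisfies the Pucci equation α λ⁺ + λ⁻ = 0, where λ⁺ and λ⁻ denote the positive and negative eigenvalues of D²u. -/

import Mathlib

noncomputable def pxx (u : ℝ → ℝ → ℝ) (x y : ℝ) : ℝ := deriv (deriv (fun s => u s y)) x
noncomputable def pyy (u : ℝ → ℝ → ℝ) (x y : ℝ) : ℝ := deriv (deriv (u x)) y
noncomputable def pxy (u : ℝ → ℝ → ℝ) (x y : ℝ) : ℝ :=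
  deriv (fun s => deriv (fun t => u s t) y) x

/-- Hessian of `u : ℝ → ℝ → ℝ` as a 2×2 matrix. -/
noncomputable def hess2 (u : ℝ → ℝ → ℝ) (x y : ℝ) : Matrix (Fin 2) (Fin 2) ℝ :=
  !![pxx u x y, pxy u x y; pxy u x y, pyy u x y]

/-!
Writing `u = φ (q)` with `q = (x + 1)² + (y + 1)²` and `z = (x + 1, y + 1)`, the chain rule gives
`D²u = 2 φ'(q) I + 4 φ''(q) z zᵀ`, a rank-one perturbation of a scalar matrix. Its eigenvalues are
therefore `2 φ'(q)`, on the line orthogonal to `z`, and `2 φ'(q) + 4 q φ''(q)`, on the line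
spanned by `z`. For `φ q = -q ^ p` with `2 p = 1 - α` their ratio is `2 p - 1 = -α`.
-/

open Filter Matrix Topology

theorem det_smul_one_add_vecMulVec {n R : Type*} [Fintype n] [DecidableEq n] [Nonempty n]
    [CommRing R] (c : R) (v w : n → R) :
    (c • (1 : Matrix n n R) + vecMulVec v w).det =
      c ^ (Fintype.card n - 1) * (c + v ⬝ᵥ w) := by
  have hcard : c ^ Fintype.card n = c ^ (Fintype.card n - 1) * c :=
    (pow_sub_one_mul Fintype.card_ne_zero c).symm
  have hchar := eval_charpoly (vecMulVec (-v) w) c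
  rw [charpoly_vecMulVec, scalar_apply, ← smul_one_eq_diagonal, neg_vecMulVec,
    sub_neg_eq_add] at hchar
  rw [← hchar]
  simp only [neg_dotProduct, Polynomial.eval_sub, Polynomial.eval_pow, Polynomial.eval_X,
    Polynomial.eval_smul, smul_eq_mul, hcard]
  ring

section Hessian

variable {u v : ℝ → ℝ → ℝ} {x y : ℝ}

theorem pxx_congr (h : ∀ᶠ s in 𝓝 x, u s y = v s y) : pxx u x y = pxx v x y :=
  (EventuallyEq.deriv h).deriv_eq

theorem pyy_congr (h : ∀ᶠ t in 𝓝 y, u x t = v x t) : pyy u x y = pyy v x y :=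
  (EventuallyEq.deriv h).deriv_eq

theorem pxy_congr (h : ∀ᶠ s in 𝓝 x, ∀ᶠ t in 𝓝 y, u s t = v s t) : pxy u x y = pxy v x y :=
  EventuallyEq.deriv_eq (h.mono fun _ hs => EventuallyEq.deriv_eq hs)

theorem hess2_congr (h : ∀ᶠ p in 𝓝 (x, y), u p.1 p.2 = v p.1 p.2) :
    hess2 u x y = hess2 v x y := by
  have hxx : pxx u x y = pxx v x y :=
    pxx_congr ((Continuous.prodMk_left y).continuousAt.eventually h)
  have hyy : pyy u x y = pyy v x y :=
    pyy_congr ((Continuous.prodMk_right x).continuousAt.eventually h)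
  have hxy : pxy u x y = pxy v x y := pxy_congr h.curry_nhds
  rw [hess2, hess2, hxx, hyy, hxy]

end Hessian

section Radial

variable {φ φ' : ℝ → ℝ} {φ₁ φ₂ a b c x y : ℝ}

theorem hasDerivAt_comp_sq_sub_add (hφ : HasDerivAt φ φ₁ ((x - a) ^ 2 + c)) :
    HasDerivAt (fun s => φ ((s - a) ^ 2 + c)) (φ₁ * (2 * (x - a))) x := by
  have hsq : HasDerivAt (fun s => (s - a) ^ 2 + c) (2 * (x - a)) x := by
    simpa using (((hasDerivAt_id x).sub_const a).pow 2).add_const c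
  exact hφ.comp x hsq

theorem deriv_deriv_comp_sq_sub_add
    (hφ : ∀ᶠ q in 𝓝 ((x - a) ^ 2 + c), HasDerivAt φ (φ' q) q)
    (hφ' : HasDerivAt φ' φ₂ ((x - a) ^ 2 + c)) :
    deriv (deriv fun s => φ ((s - a) ^ 2 + c)) x =
      2 * φ' ((x - a) ^ 2 + c) + 4 * φ₂ * (x - a) ^ 2 := by
  have hcont : ContinuousAt (fun s => (s - a) ^ 2 + c) x := by fun_prop
  have hfirst : deriv (fun s => φ ((s - a) ^ 2 + c)) =ᶠ[𝓝 x]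
      fun s => φ' ((s - a) ^ 2 + c) * (2 * (s - a)) :=
    (hcont.eventually hφ).mono fun _ hs => (hasDerivAt_comp_sq_sub_add hs).deriv
  have hlin : HasDerivAt (fun s => 2 * (s - a)) 2 x := by
    simpa using ((hasDerivAt_id x).sub_const a).const_mul 2
  rw [hfirst.deriv_eq, ((hasDerivAt_comp_sq_sub_add hφ').fun_mul hlin).deriv]
  ring

theorem pxy_radial
    (hφ : ∀ᶠ q in 𝓝 ((x - a) ^ 2 + (y - b) ^ 2), HasDerivAt φ (φ' q) q)
    (hφ' : HasDerivAt φ' φ₂ ((x - a) ^ 2 + (y - b) ^ 2)) :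
    pxy (fun s t => φ ((s - a) ^ 2 + (t - b) ^ 2)) x y = 4 * φ₂ * ((x - a) * (y - b)) := by
  have hcont : ContinuousAt (fun s => (s - a) ^ 2 + (y - b) ^ 2) x := by fun_prop
  have hfirst : (fun s => deriv (fun t => φ ((s - a) ^ 2 + (t - b) ^ 2)) y) =ᶠ[𝓝 x]
      fun s => φ' ((s - a) ^ 2 + (y - b) ^ 2) * (2 * (y - b)) := by
    filter_upwards [hcont.eventually hφ] with s hs
    simp only [add_comm ((s - a) ^ 2)] at hs ⊢
    exact (hasDerivAt_comp_sq_sub_add hs).deriv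
  rw [pxy, hfirst.deriv_eq, ((hasDerivAt_comp_sq_sub_add hφ').mul_const _).deriv]
  ring

theorem hess2_radial
    (hφ : ∀ᶠ q in 𝓝 ((x - a) ^ 2 + (y - b) ^ 2), HasDerivAt φ (φ' q) q)
    (hφ' : HasDerivAt φ' φ₂ ((x - a) ^ 2 + (y - b) ^ 2)) :
    hess2 (fun s t => φ ((s - a) ^ 2 + (t - b) ^ 2)) x y =
      (2 * φ' ((x - a) ^ 2 + (y - b) ^ 2)) • (1 : Matrix (Fin 2) (Fin 2) ℝ) +
        (4 * φ₂) • vecMulVec ![x - a, y - b] ![x - a, y - b] := by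
  have hxx : pxx (fun s t => φ ((s - a) ^ 2 + (t - b) ^ 2)) x y =
      2 * φ' ((x - a) ^ 2 + (y - b) ^ 2) + 4 * φ₂ * (x - a) ^ 2 :=
    deriv_deriv_comp_sq_sub_add hφ hφ'
  have hyy : pyy (fun s t => φ ((s - a) ^ 2 + (t - b) ^ 2)) x y =
      2 * φ' ((x - a) ^ 2 + (y - b) ^ 2) + 4 * φ₂ * (y - b) ^ 2 := by
    simp only [pyy, add_comm ((x - a) ^ 2)] at hφ hφ' ⊢
    exact deriv_deriv_comp_sq_sub_add hφ hφ'
  rw [hess2, hxx, hyy, pxy_radial hφ hφ']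
  ext i j
  fin_cases i <;> fin_cases j <;> simp [pow_two, mul_comm (y - b)]

theorem det_hess2_radial_sub_smul_one
    (hφ : ∀ᶠ q in 𝓝 ((x - a) ^ 2 + (y - b) ^ 2), HasDerivAt φ (φ' q) q)
    (hφ' : HasDerivAt φ' φ₂ ((x - a) ^ 2 + (y - b) ^ 2)) (t : ℝ) :
    (hess2 (fun s t => φ ((s - a) ^ 2 + (t - b) ^ 2)) x y -
        t • (1 : Matrix (Fin 2) (Fin 2) ℝ)).det =
      (2 * φ' ((x - a) ^ 2 + (y - b) ^ 2) - t) *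
        (2 * φ' ((x - a) ^ 2 + (y - b) ^ 2) + 4 * φ₂ * ((x - a) ^ 2 + (y - b) ^ 2) - t) := by
  rw [hess2_radial hφ hφ', add_sub_right_comm, ← sub_smul, ← smul_vecMulVec,
    det_smul_one_add_vecMulVec, smul_dotProduct, Fintype.card_fin, pow_one, vec2_dotProduct']
  simp only [smul_eq_mul]
  ring

theorem det_hess2_neg_rpow_sub_smul_one (p : ℝ) (hq : 0 < (x - a) ^ 2 + (y - b) ^ 2) (t : ℝ) :
    (hess2 (fun s t => -((s - a) ^ 2 + (t - b) ^ 2) ^ p) x y -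
        t • (1 : Matrix (Fin 2) (Fin 2) ℝ)).det =
      (-2 * p * ((x - a) ^ 2 + (y - b) ^ 2) ^ (p - 1) - t) *
        (-2 * p * (2 * p - 1) * ((x - a) ^ 2 + (y - b) ^ 2) ^ (p - 1) - t) := by
  have hφ : ∀ᶠ q in 𝓝 ((x - a) ^ 2 + (y - b) ^ 2),
      HasDerivAt (fun q : ℝ => -q ^ p) (-(p * q ^ (p - 1))) q :=
    (eventually_gt_nhds hq).mono fun _ h => (Real.hasDerivAt_rpow_const (.inl h.ne')).neg
  have hφ' := ((Real.hasDerivAt_rpow_const (p := p - 1) (.inl hq.ne')).const_mul p).neg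
  rw [det_hess2_radial_sub_smul_one (φ := fun q => -q ^ p) hφ hφ', Real.rpow_sub_one hq.ne' (p - 1)]
  field_simp
  ring

end Radial

theorem pucci_exact_solution_general {α a b x y : ℝ} (hα : 1 < α) (hxy : x ≠ a ∨ y ≠ b)
    {u : ℝ → ℝ → ℝ}
    (hu : ∀ᶠ p in 𝓝 (x, y),
      u p.1 p.2 = -(((p.1 - a) ^ 2 + (p.2 - b) ^ 2) ^ ((1 - α) / 2))) :
    ∃ lpos lneg : ℝ, 0 < lpos ∧ lneg < 0 ∧
      α * lpos + lneg = 0 ∧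
      (∀ t : ℝ, (hess2 u x y - t • (1 : Matrix (Fin 2) (Fin 2) ℝ)).det = 0 ↔
        (t = lpos ∨ t = lneg)) := by
  have hq : 0 < (x - a) ^ 2 + (y - b) ^ 2 := by
    rcases hxy with hx | hy
    · have := sub_ne_zero.mpr hx
      positivity
    · have := sub_ne_zero.mpr hy
      positivity
  set lam := (α - 1) * ((x - a) ^ 2 + (y - b) ^ 2) ^ ((1 - α) / 2 - 1) with hlam
  have hlam_pos : 0 < lam := mul_pos (sub_pos.mpr hα) (Real.rpow_pos_of_pos hq _)
  have hdet (t : ℝ) : (hess2 u x y - t • (1 : Matrix (Fin 2) (Fin 2) ℝ)).det =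
      (lam - t) * (-(α * lam) - t) := by
    rw [hess2_congr (v := fun s t => -((s - a) ^ 2 + (t - b) ^ 2) ^ ((1 - α) / 2)) hu,
      det_hess2_neg_rpow_sub_smul_one _ hq, hlam]
    ring
  refine ⟨lam, -(α * lam), hlam_pos, neg_neg_of_pos (by positivity), by ring, fun t => ?_⟩
  rw [hdet, mul_eq_zero, sub_eq_zero, sub_eq_zero, eq_comm, eq_comm (b := t)]

/-- for `α > 1` and `u(x,y) = −((x+1)²+(y+1)²)^((1−α)/2)` on `(0,1)²`,
the Hessian has one positive and one negative eigenvalue `λ⁺, λ⁻`, and the Pucci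
equation `α λ⁺ + λ⁻ = 0` holds. -/
theorem pucci_exact_solution (α : ℝ) (hα : 1 < α)
    (u : ℝ → ℝ → ℝ)
    (hu : ∀ x y, u x y = -(((x + 1) ^ 2 + (y + 1) ^ 2) ^ ((1 - α) / 2))) :
    ∀ x y : ℝ, x ∈ Set.Ioo (0 : ℝ) 1 → y ∈ Set.Ioo (0 : ℝ) 1 →
      ∃ lpos lneg : ℝ, 0 < lpos ∧ lneg < 0 ∧
        α * lpos + lneg = 0 ∧
        (∀ t : ℝ, (hess2 u x y - t • (1 : Matrix (Fin 2) (Fin 2) ℝ)).det = 0 ↔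
          (t = lpos ∨ t = lneg)) := by
  intro x y hx _
  exact pucci_exact_solution_general hα (a := -1) (b := -1) (Or.inl (by linarith [hx.1]))
    (.of_forall fun p => by simpa only [sub_neg_eq_add] using hu p.1 p.2)
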